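/- Let G be a multigraph, k ≥ 1, and let C be a spanning subgraph of G such that (a) the maximal k-edge-connected subgraphs of C have the same vertex sets as those of G, and (b) C contains every k-interconnection edge of G. Then for every multigraph H whose vertex set contains V(G), and for every pair of vertices u, v of G ∪ H (the union graph, whose vertex set is V(G) ∪ V(H) and whose edge multiset is the multiset union of those of the two graphs), u and v belong to the same maximal k-edge-connected subgraph of C ∪ H if and only if they belong to the same maximal k-edge-connected subgraph of G ∪ H. -/

import Mathlib

universe u

structure Multigraph (V : Type u) where
  edges : Multiset (Sym2 V)
  loopless : ∀ e ∈ edges, ¬ e.IsDiag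

namespace Multigraph

variable {V : Type u}

/-- Reachability via the edges of a multiset of (undirected) edges. -/
def MReach (F : Multiset (Sym2 V)) : V → V → Prop :=
  Relation.ReflTransGen (fun x y => s(x, y) ∈ F)

/-- Reachability in a multigraph. -/
def Reachable (G : Multigraph V) : V → V → Prop := MReach G.edges

open Classical in
/-- Delete a multiset of edges. -/
noncomputable def deleteEdges (G : Multigraph V) (F : Multiset (Sym2 V)) : Multigraph V :=
  ⟨G.edges - F, fun e he => G.loopless e (Multiset.mem_of_le (tsub_le_self) he)⟩

/-- `lam G x y` : the minimum number of edges whose deletion disconnects `x` from `y`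
(`⊤` if no set of edges disconnects them, e.g. when `x = y`). -/
noncomputable def lam (G : Multigraph V) (x y : V) : ℕ∞ :=
  sInf {n : ℕ∞ | ∃ F : Multiset (Sym2 V), F ≤ G.edges ∧
      ¬ (G.deleteEdges F).Reachable x y ∧ n = (Multiset.card F : ℕ∞)}

open Classical in
/-- The multigraph with edge multiset `F`, discarding self-loops. -/
noncomputable def ofEdges (F : Multiset (Sym2 V)) : Multigraph V :=
  ⟨F.filter (fun e => ¬ e.IsDiag), fun e he => (Multiset.mem_filter.mp he).2⟩

open Classical in
/-- The subgraph of `G` induced by the vertex set `S`. -/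
noncomputable def induce (G : Multigraph V) (S : Set V) : Multigraph V :=
  ⟨G.edges.filter (fun e => ∀ v ∈ e, v ∈ S), fun e he =>
      G.loopless e (Multiset.mem_filter.mp he).1⟩

/-- The induced subgraph `G[S]` is `k`-edge-connected. -/
def IsKEdgeConnectedSet (G : Multigraph V) (k : ℕ) (S : Set V) : Prop :=
  S.Nonempty ∧ ∀ x ∈ S, ∀ y ∈ S, (k : ℕ∞) ≤ (G.induce S).lam x y

/-- `G[S]` is a maximal `k`-edge-connected subgraph of `G`. -/
def IsMaxKEdgeConnectedSubgraph (G : Multigraph V) (k : ℕ) (S : Set V) : Prop :=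
  G.IsKEdgeConnectedSet k S ∧
    ∀ T : Set V, S ⊆ T → G.IsKEdgeConnectedSet k T → T = S


/-- `e` is a `k`-interconnection edge: its two endpoints lie in different maximal
`k`-edge-connected subgraphs of `G`. -/
def IsInterconnectionEdge (G : Multigraph V) (k : ℕ) (e : Sym2 V) : Prop :=
  ¬ ∃ S : Set V, G.IsMaxKEdgeConnectedSubgraph k S ∧ ∀ v ∈ e, v ∈ S

open Classical in
/-- The multiset of `k`-interconnection edges of `G`. -/
noncomputable def interEdges (G : Multigraph V) (k : ℕ) : Multiset (Sym2 V) :=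
  G.edges.filter (G.IsInterconnectionEdge k)

/-- The union of two multigraphs on the same vertex type: the multiset union of edges. -/
def union (G H : Multigraph V) : Multigraph V :=
  ⟨G.edges + H.edges, fun e he => by
    rcases Multiset.mem_add.mp he with h | h
    · exact G.loopless e h
    · exact H.loopless e h⟩

end Multigraph

namespace Multigraph

open Classical in
/-- The edges of `E` inside `S` that cross the cut `A`. -/
noncomputable def cutIn {V : Type u} (E : Multiset (Sym2 V)) (S A : Set V) :
    Multiset (Sym2 V) :=
  E.filter (fun e => (∀ v ∈ e, v ∈ S) ∧ (∃ v ∈ e, v ∈ A) ∧ (∃ v ∈ e, v ∉ A))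

theorem cutIn_mono {V : Type u} {E E' : Multiset (Sym2 V)} {S S' : Set V} (A : Set V)
    (h : E ≤ E') (hS : S ⊆ S') : cutIn E S A ≤ cutIn E' S' A := by
  classical
  unfold cutIn
  refine (Multiset.filter_le_filter _ h).trans ?_
  refine Multiset.monotone_filter_right _ ?_
  rintro e ⟨h1, h2⟩
  exact ⟨fun v hv => hS (h1 v hv), h2⟩

theorem cutIn_add {V : Type u} (E E' : Multiset (Sym2 V)) (S A : Set V) :
    cutIn (E + E') S A = cutIn E S A + cutIn E' S A := by
  classical
  unfold cutIn
  exact Multiset.filter_add _ _ _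

theorem cutIn_le_of_inter {V : Type u} {G C : Multigraph V} {k : ℕ} {S A : Set V}
    (hb : G.interEdges k ≤ C.edges)
    (hinter : ∀ e : Sym2 V,
        (∀ v ∈ e, v ∈ S) ∧ (∃ v ∈ e, v ∈ A) ∧ (∃ v ∈ e, v ∉ A) →
        G.IsInterconnectionEdge k e) :
    cutIn G.edges S A ≤ cutIn C.edges S A := by
  classical
  unfold cutIn
  rw [Multiset.le_filter]
  refine ⟨le_trans ?_ hb, fun e he => (Multiset.mem_filter.mp he).2⟩
  unfold Multigraph.interEdges
  exact Multiset.monotone_filter_right _ hinter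

theorem kec_iff {V : Type u} (G : Multigraph V) (k : ℕ) (S : Set V) :
    G.IsKEdgeConnectedSet k S ↔ S.Nonempty ∧ ∀ A : Set V, (∃ x ∈ S, x ∈ A) →
      (∃ y ∈ S, y ∉ A) → k ≤ Multiset.card (cutIn G.edges S A) := by
  classical
  unfold IsKEdgeConnectedSet
  refine and_congr_right fun _ => ⟨?_, ?_⟩
  · rintro h A ⟨x, hx, hxA⟩ ⟨y, hy, hyA⟩
    have h1 := h x hx y hy
    have h2 : (G.induce S).lam x y ≤ (Multiset.card (cutIn G.edges S A) : ℕ∞) := by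
      refine sInf_le ⟨cutIn G.edges S A, ?_, ?_, rfl⟩
      · unfold cutIn induce
        exact Multiset.monotone_filter_right _ fun e he => he.1
      · intro hr
        have key : ∀ z, (((G.induce S).deleteEdges (cutIn G.edges S A)).Reachable x z) →
            z ∈ A := by
          intro z hz
          induction hz with
          | refl => exact hxA
          | @tail b c _ hbc ih =>
            by_contra hc
            have hbc' : s(b, c) ∈ (G.induce S).edges - cutIn G.edges S A := by
              unfold deleteEdges at hbc
              convert hbc
            have hmem : s(b, c) ∈ (G.induce S).edges :=
              Multiset.mem_of_le tsub_le_self hbc'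
            have hS : ∀ v ∈ s(b, c), v ∈ S := by
              have := hmem
              unfold induce at this
              exact (Multiset.mem_filter.mp this).2
            have e1 : Multiset.count s(b, c) (G.induce S).edges
                = Multiset.count s(b, c) G.edges := by
              unfold induce
              exact Multiset.count_filter_of_pos hS
            have e2 : Multiset.count s(b, c) (cutIn G.edges S A)
                = Multiset.count s(b, c) G.edges := by
              unfold cutIn
              exact Multiset.count_filter_of_pos
                ⟨hS, ⟨b, Sym2.mem_mk_left b c, ih⟩, ⟨c, Sym2.mem_mk_right b c, hc⟩⟩
            have := Multiset.count_pos.mpr hbc'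
            rw [Multiset.count_sub, e1, e2] at this
            omega
        exact hyA (key y hr)
    exact_mod_cast h1.trans h2
  · intro h x hx y hy
    refine le_sInf ?_
    rintro n ⟨F, hF, hnr, rfl⟩
    set A : Set V := {z | ((G.induce S).deleteEdges F).Reachable x z} with hA
    have h1 := h A ⟨x, hx, Relation.ReflTransGen.refl⟩ ⟨y, hy, hnr⟩
    have h2 : cutIn G.edges S A ≤ F := by
      rw [Multiset.le_iff_count]
      intro e
      by_cases he : (∀ v ∈ e, v ∈ S) ∧ (∃ v ∈ e, v ∈ A) ∧ (∃ v ∈ e, v ∉ A)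
      · have e0 : e ∉ (G.induce S).edges - F := by
          intro hmem
          obtain ⟨_, ⟨b, hb, hbA⟩, ⟨c, hc, hcA⟩⟩ := he
          have hbc : b ≠ c := fun h => hcA (h ▸ hbA)
          have : e = s(b, c) := ((Sym2.mem_and_mem_iff hbc).mp ⟨hb, hc⟩)
          subst this
          refine hcA (Relation.ReflTransGen.tail hbA ?_)
          unfold deleteEdges
          convert hmem
        have e1 : Multiset.count e (G.induce S).edges = Multiset.count e G.edges := by
          unfold induce
          exact Multiset.count_filter_of_pos he.1
        have e2 : Multiset.count e (cutIn G.edges S A) = Multiset.count e G.edges := by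
          unfold cutIn
          exact Multiset.count_filter_of_pos he
        have e3 := Multiset.count_eq_zero.mpr e0
        rw [Multiset.count_sub] at e3
        omega
      · have : Multiset.count e (cutIn G.edges S A) = 0 := by
          unfold cutIn
          exact Multiset.count_filter_of_neg he
        omega
    exact_mod_cast h1.trans (Multiset.card_le_card h2)

theorem kec_mono {V : Type u} {G G' : Multigraph V} {k : ℕ} {S : Set V}
    (h : G.edges ≤ G'.edges) (hS : G.IsKEdgeConnectedSet k S) :
    G'.IsKEdgeConnectedSet k S := by
  rw [kec_iff] at hS ⊢
  exact ⟨hS.1, fun A h1 h2 => (hS.2 A h1 h2).trans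
    (Multiset.card_le_card (cutIn_mono A h subset_rfl))⟩

theorem kec_union {V : Type u} {G : Multigraph V} {k : ℕ} {S T : Set V}
    (hS : G.IsKEdgeConnectedSet k S) (hT : G.IsKEdgeConnectedSet k T)
    {w : V} (hwS : w ∈ S) (hwT : w ∈ T) : G.IsKEdgeConnectedSet k (S ∪ T) := by
  rw [kec_iff] at hS hT ⊢
  refine ⟨⟨w, Or.inl hwS⟩, fun A h1 h2 => ?_⟩
  by_cases hs : (∃ x ∈ S, x ∈ A) ∧ (∃ y ∈ S, y ∉ A)
  · exact (hS.2 A hs.1 hs.2).trans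
      (Multiset.card_le_card (cutIn_mono A le_rfl Set.subset_union_left))
  · have ht : (∃ x ∈ T, x ∈ A) ∧ (∃ y ∈ T, y ∉ A) := by
      obtain ⟨x, hx, hxA⟩ := h1
      obtain ⟨y, hy, hyA⟩ := h2
      by_cases hwA : w ∈ A
      · refine ⟨⟨w, hwT, hwA⟩, ⟨y, ?_, hyA⟩⟩
        exact hy.resolve_left fun h => hs ⟨⟨w, hwS, hwA⟩, ⟨y, h, hyA⟩⟩
      · refine ⟨⟨x, ?_, hxA⟩, ⟨w, hwT, hwA⟩⟩
        exact hx.resolve_left fun h => hs ⟨⟨x, h, hxA⟩, ⟨w, hwS, hwA⟩⟩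
    exact (hT.2 A ht.1 ht.2).trans
      (Multiset.card_le_card (cutIn_mono A le_rfl Set.subset_union_right))

theorem exists_max {V : Type u} [Fintype V] {G : Multigraph V} {k : ℕ} {S : Set V}
    (hS : G.IsKEdgeConnectedSet k S) :
    ∃ T, S ⊆ T ∧ G.IsMaxKEdgeConnectedSubgraph k T := by
  obtain ⟨T, hST, hT⟩ :=
    (Set.toFinite {T : Set V | G.IsKEdgeConnectedSet k T}).exists_le_maximal hS
  exact ⟨T, hST, hT.1, fun U hTU hU => Set.Subset.antisymm (hT.2 hU hTU) hTU⟩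

end Multigraph

theorem sparse_certificate_union_property {V : Type u} [Fintype V]
    (G C : Multigraph V) (k : ℕ) (hk : 1 ≤ k)
    (hsub : C.edges ≤ G.edges)
    (ha : ∀ S : Set V,
        C.IsMaxKEdgeConnectedSubgraph k S ↔ G.IsMaxKEdgeConnectedSubgraph k S)
    (hb : G.interEdges k ≤ C.edges) :
    ∀ (H : Multigraph V) (u v : V),
      (∃ S : Set V, (C.union H).IsMaxKEdgeConnectedSubgraph k S ∧ u ∈ S ∧ v ∈ S) ↔
        (∃ S : Set V, (G.union H).IsMaxKEdgeConnectedSubgraph k S ∧ u ∈ S ∧ v ∈ S) := by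
  classical
  intro H u v
  have hle : (C.union H).edges ≤ (G.union H).edges := by
    unfold Multigraph.union
    exact add_le_add hsub le_rfl
  constructor
  · rintro ⟨S, hS, hu, hv⟩
    obtain ⟨T, hST, hT⟩ := Multigraph.exists_max (Multigraph.kec_mono hle hS.1)
    exact ⟨T, hT, hST hu, hST hv⟩
  · rintro ⟨S, hS, hu, hv⟩
    suffices h : (C.union H).IsKEdgeConnectedSet k S by
      obtain ⟨T, hST, hT⟩ := Multigraph.exists_max h
      exact ⟨T, hT, hST hu, hST hv⟩
    rw [Multigraph.kec_iff]
    refine ⟨⟨u, hu⟩, fun A h1 h2 => ?_⟩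
    by_contra hlt
    have hG := ((Multigraph.kec_iff _ _ _).mp hS.1).2 A h1 h2
    have hCle : C.edges ≤ (C.union H).edges := Multiset.le_add_right _ _
    have hGle : G.edges ≤ (G.union H).edges := Multiset.le_add_right _ _
    have hinter : ∀ e : Sym2 V,
        (∀ v ∈ e, v ∈ S) ∧ (∃ v ∈ e, v ∈ A) ∧ (∃ v ∈ e, v ∉ A) →
        G.IsInterconnectionEdge k e := by
      rintro e ⟨heS, ⟨x, hx, hxA⟩, ⟨y, hy, hyA⟩⟩ ⟨M, hM, heM⟩
      have hMS : M ⊆ S := by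
        have := hS.2 (S ∪ M) Set.subset_union_left
          (Multigraph.kec_union hS.1 (Multigraph.kec_mono hGle hM.1) (heS x hx) (heM x hx))
        exact Set.union_eq_left.mp this
      have hMC := ((Multigraph.kec_iff _ _ _).mp ((ha M).mpr hM).1).2 A
        ⟨x, heM x hx, hxA⟩ ⟨y, heM y hy, hyA⟩
      exact hlt (hMC.trans (Multiset.card_le_card (Multigraph.cutIn_mono A hCle hMS)))
    have hcut := Multigraph.cutIn_le_of_inter hb hinter
    have hadd : Multigraph.cutIn (G.union H).edges S A
        ≤ Multigraph.cutIn (C.union H).edges S A := by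
      unfold Multigraph.union
      rw [Multigraph.cutIn_add, Multigraph.cutIn_add]
      exact add_le_add hcut le_rfl
    exact hlt (hG.trans (Multiset.card_le_card hadd))
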